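/- ∑_{n=1}^∞ 1/n³ = (1/4) · ∑_{n=1}^∞ (−1)^{n−1} · (56n² − 32n + 5) / ((2n−1)² · n³) · (n!)³ / (3n)!. -/

import Mathlib

open Filter Topology Finset

/-- The vertical component of the Wilf–Zeilberger pair, meaningful for `k < n`. -/
noncomputable def wzF (n k : ℕ) : ℝ :=
  (-1) ^ k * (k.factorial : ℝ) ^ 2 * ((n - k - 1).factorial : ℝ) /
    (((n + k + 1).factorial : ℝ) * (k + 1))

/-- The horizontal component of the Wilf–Zeilberger pair, meaningful for `k ≤ n`. -/
noncomputable def wzG (n k : ℕ) : ℝ :=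
  2 * (-1) ^ k * (k.factorial : ℝ) ^ 2 * ((n - k).factorial : ℝ) /
    (((n + k + 1).factorial : ℝ) * (n + 1) ^ 2)

lemma wzF_succ_sub {n k : ℕ} (h : k < n) :
    wzF (n + 1) k - wzF n k = wzG n (k + 1) - wzG n k := by
  obtain ⟨j, rfl⟩ := Nat.exists_eq_add_of_lt h
  have e1 : k + j + 1 + 1 - k - 1 = j + 1 := by omega
  have e2 : j + 1 - 1 = j := by omega
  have e3 : k + j + 1 - (k + 1) = j := by omega
  have e4 : k + j + 1 - k = j + 1 := by omega
  have e5 : k + j + 1 + 1 + k + 1 = (k + j + 1 + k + 1) + 1 := by omega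
  have e6 : k + j + 1 + (k + 1) + 1 = (k + j + 1 + k + 1) + 1 := by omega
  simp only [wzF, wzG, e1, e2, e3, e4, e5, e6]
  rw [Nat.factorial_succ (k + j + 1 + k + 1), Nat.factorial_succ j, Nat.factorial_succ k]
  have hM := (k + j + 1 + k + 1).factorial_ne_zero
  generalize (k + j + 1 + k + 1).factorial = M at *
  have hk := k.factorial_ne_zero
  have hj := j.factorial_ne_zero
  generalize k.factorial = f at *
  generalize j.factorial = g at *
  push_cast
  field_simp
  ring

lemma wzG_zero (n : ℕ) : wzG n 0 = 2 * (1 / ((n : ℝ) + 1) ^ 3) := by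
  simp only [wzG, Nat.sub_zero, Nat.add_zero, Nat.factorial_succ]
  have := n.factorial_ne_zero
  push_cast
  field_simp
  simp

lemma abs_wzF_le {n k : ℕ} (h : k < n) : |wzF n k| ≤ 1 / (n : ℝ) ^ 2 := by
  obtain ⟨m, rfl⟩ : ∃ m, n = m + 1 := ⟨n - 1, by omega⟩
  have h1 : k.factorial * (m + 1 - k - 1).factorial ≤ m.factorial := by
    have := Nat.le_of_dvd (Nat.factorial_pos _)
      (Nat.factorial_mul_factorial_dvd_factorial_add k (m + 1 - k - 1))
    rwa [show k + (m + 1 - k - 1) = m by omega] at this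
  have h2 : k.factorial * (m + 2).factorial ≤ (m + 1 + k + 1).factorial := by
    have := Nat.le_of_dvd (Nat.factorial_pos _)
      (Nat.factorial_mul_factorial_dvd_factorial_add k (m + 2))
    rwa [show k + (m + 2) = m + 1 + k + 1 by omega] at this
  have h3 : k.factorial ^ 2 * (m + 1 - k - 1).factorial * (m + 1) ^ 2 ≤
      (m + 1 + k + 1).factorial * (k + 1) := by
    calc k.factorial ^ 2 * (m + 1 - k - 1).factorial * (m + 1) ^ 2
        = k.factorial * (k.factorial * (m + 1 - k - 1).factorial) * (m + 1) ^ 2 := by ring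
      _ ≤ k.factorial * m.factorial * ((m + 2) * (m + 1)) := by gcongr; nlinarith
      _ = k.factorial * (m + 2).factorial := by
        rw [Nat.factorial_succ (m + 1), Nat.factorial_succ m]; ring
      _ ≤ (m + 1 + k + 1).factorial := h2
      _ ≤ (m + 1 + k + 1).factorial * (k + 1) := Nat.le_mul_of_pos_right _ (by omega)
  have h3' : (k.factorial : ℝ) ^ 2 * ((m + 1 - k - 1).factorial : ℝ) * ((m : ℝ) + 1) ^ 2 ≤
      ((m + 1 + k + 1).factorial : ℝ) * (k + 1) := by exact_mod_cast h3
  have h4 : |wzF (m + 1) k| = (k.factorial : ℝ) ^ 2 * ((m + 1 - k - 1).factorial : ℝ) /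
      (((m + 1 + k + 1).factorial : ℝ) * (k + 1)) := by
    rw [wzF, abs_div, abs_mul, abs_mul, abs_pow, abs_neg, abs_one, one_pow, one_mul,
      abs_of_nonneg (by positivity), abs_of_nonneg (by positivity), abs_of_nonneg (by positivity)]
  rw [h4, div_le_div_iff₀ (by positivity) (by positivity)]
  push_cast
  linarith

/-- The sum of the pair along the step from `(2n, n)` to `(2n + 2, n + 1)`. -/
noncomputable def wzDiagonal (n : ℕ) : ℝ :=
  wzF (2 * n + 2) n + wzG (2 * n) n + wzG (2 * n + 1) n

lemma sum_wzG_add_sum_wzF (N : ℕ) :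
    ∑ m ∈ range (2 * N), wzG m 0 + ∑ k ∈ range N, wzF (2 * N) k =
      ∑ n ∈ range N, wzDiagonal n := by
  induction N with
  | zero => simp
  | succ N ih =>
    have key : ∑ k ∈ range N, wzF (2 * N + 2) k - ∑ k ∈ range N, wzF (2 * N) k =
        wzG (2 * N + 1) N + wzG (2 * N) N - (wzG (2 * N + 1) 0 + wzG (2 * N) 0) := by
      rw [← sum_sub_distrib, ← sum_range_sub (fun k => wzG (2 * N + 1) k + wzG (2 * N) k)]
      refine sum_congr rfl fun k hk => ?_
      have hk := mem_range.mp hk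
      have h1 := wzF_succ_sub (show k < 2 * N + 1 by omega)
      have h2 := wzF_succ_sub (show k < 2 * N by omega)
      linarith
    rw [show 2 * (N + 1) = 2 * N + 1 + 1 by ring, sum_range_succ _ (2 * N + 1),
      sum_range_succ _ (2 * N), sum_range_succ _ N, sum_range_succ _ N, ← ih, wzDiagonal]
    linarith

lemma tendsto_sum_wzF : Tendsto (fun N => ∑ k ∈ range N, wzF (2 * N) k) atTop (𝓝 0) := by
  refine squeeze_zero_norm' (a := fun N : ℕ => 1 / (N : ℝ)) ?_ tendsto_one_div_atTop_nhds_zero_nat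
  filter_upwards [eventually_gt_atTop 0] with N hN
  have hN' : (0 : ℝ) < N := by exact_mod_cast hN
  calc ‖∑ k ∈ range N, wzF (2 * N) k‖ ≤ ∑ k ∈ range N, 1 / ((2 * N : ℕ) : ℝ) ^ 2 := by
        refine norm_sum_le_of_le _ fun k hk => abs_wzF_le ?_
        have := mem_range.mp hk
        omega
    _ = N * (1 / (2 * (N : ℝ)) ^ 2) := by simp
    _ ≤ 1 / (N : ℝ) := by
        field_simp
        norm_num

/-- The general term of the Markov–Amdeberhan series. -/
noncomputable def markovTerm (n : ℕ) : ℝ :=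
  (-1 : ℝ) ^ n *
    ((56 * ((n : ℝ) + 1) ^ 2 - 32 * ((n : ℝ) + 1) + 5) /
      ((2 * ((n : ℝ) + 1) - 1) ^ 2 * ((n : ℝ) + 1) ^ 3)) *
    (((n + 1).factorial : ℝ) ^ 3 / ((3 * (n + 1)).factorial : ℝ))

lemma wzDiagonal_eq (n : ℕ) : wzDiagonal n = markovTerm n / 2 := by
  have e1 : 2 * n + 2 - n - 1 = n + 1 := by omega
  have e2 : 2 * n - n = n := by omega
  have e3 : 2 * n + 1 - n = n + 1 := by omega
  have e4 : 2 * n + 2 + n + 1 = 3 * n + 1 + 1 + 1 := by omega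
  have e5 : 2 * n + n + 1 = 3 * n + 1 := by omega
  have e6 : 2 * n + 1 + n + 1 = 3 * n + 1 + 1 := by omega
  have e7 : 3 * (n + 1) = 3 * n + 1 + 1 + 1 := by omega
  have e8 : 2 * ((n : ℝ) + 1) - 1 = 2 * n + 1 := by ring
  simp only [wzDiagonal, wzF, wzG, markovTerm, e1, e2, e3, e4, e5, e6, e7, e8]
  rw [Nat.factorial_succ (3 * n + 1 + 1), Nat.factorial_succ (3 * n + 1), Nat.factorial_succ n]
  have hM := (3 * n + 1).factorial_ne_zero
  generalize (3 * n + 1).factorial = M at *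
  have hn := n.factorial_ne_zero
  generalize n.factorial = f at *
  push_cast
  field_simp
  ring

lemma summable_one_div_succ_cube : Summable fun n : ℕ => 1 / ((n : ℝ) + 1) ^ 3 := by
  have := (summable_nat_add_iff 1).mpr (Real.summable_one_div_nat_pow.mpr (by norm_num : 1 < 3))
  simpa using this

lemma summable_markovTerm : Summable markovTerm := by
  refine Summable.of_norm_bounded (summable_one_div_succ_cube.mul_left 56) fun n => ?_
  have hf : (((n + 1).factorial : ℝ) ^ 3 / ((3 * (n + 1)).factorial : ℝ)) ≤ 1 := by
    have h1 := Nat.factorial_mul_factorial_dvd_factorial_add (n + 1) (n + 1)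
    have h2 := Nat.factorial_mul_factorial_dvd_factorial_add (n + 1 + (n + 1)) (n + 1)
    have h3 := Nat.le_of_dvd (Nat.factorial_pos _) ((mul_dvd_mul_right h1 _).trans h2)
    rw [div_le_one (by positivity)]
    rw [show n + 1 + (n + 1) + (n + 1) = 3 * (n + 1) by ring] at h3
    calc ((n + 1).factorial : ℝ) ^ 3
        = ((n + 1).factorial * (n + 1).factorial * (n + 1).factorial : ℕ) := by push_cast; ring
      _ ≤ _ := by exact_mod_cast h3
  have hx : (1 : ℝ) ≤ (n : ℝ) + 1 := by simp
  rw [markovTerm]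
  generalize (n : ℝ) + 1 = x at *
  have hx' : 0 < 2 * x - 1 := by linarith
  have hnum : 0 ≤ 56 * x ^ 2 - 32 * x + 5 := by nlinarith
  rw [norm_mul, norm_mul, norm_pow, norm_neg, norm_one, one_pow, one_mul,
    Real.norm_of_nonneg (by positivity), Real.norm_of_nonneg (by positivity)]
  refine (mul_le_of_le_one_right (by positivity) hf).trans ?_
  rw [mul_one_div, div_le_div_iff₀ (by positivity) (by positivity), ← mul_assoc]
  gcongr
  nlinarith

theorem markov_amdeberhan_zeta_three :
    (∑' n : ℕ, 1 / ((n : ℝ) + 1) ^ 3)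
      = (1 / 4) * ∑' n : ℕ,
          (-1 : ℝ) ^ n *
            ((56 * ((n : ℝ) + 1) ^ 2 - 32 * ((n : ℝ) + 1) + 5) /
              ((2 * ((n : ℝ) + 1) - 1) ^ 2 * ((n : ℝ) + 1) ^ 3)) *
            (((n + 1).factorial : ℝ) ^ 3 / ((3 * (n + 1)).factorial : ℝ)) := by
  change _ = 1 / 4 * ∑' n : ℕ, markovTerm n
  have hG : Tendsto (fun N : ℕ => ∑ m ∈ range (2 * N), wzG m 0) atTop
      (𝓝 (2 * ∑' n : ℕ, 1 / ((n : ℝ) + 1) ^ 3)) := by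
    simp only [wzG_zero]
    exact (summable_one_div_succ_cube.hasSum.mul_left 2).tendsto_sum_nat.comp
      (tendsto_id.const_mul_atTop' two_pos)
  have hD : Tendsto (fun N : ℕ => ∑ n ∈ range N, wzDiagonal n) atTop
      (𝓝 ((∑' n : ℕ, markovTerm n) / 2)) := by
    simp only [wzDiagonal_eq]
    exact (summable_markovTerm.hasSum.div_const 2).tendsto_sum_nat
  have := tendsto_nhds_unique (hG.add tendsto_sum_wzF)
    (hD.congr fun N => (sum_wzG_add_sum_wzF N).symm)
  linarith
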